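/- arXiv:math/9904127 — 3 statements merged into one kernel-verified Lean document; each statement's English description precedes it below -/
import Mathlib

section
/- Let H be a complex Hilbert space, let v : H → H be a linear isometry, and let W ⊆ H be a nonzero subspace such that for all f, g ∈ W the rank-one operators h ↦ ⟨v(g), h⟩ • v(f) and h ↦ ⟨g, h⟩ • f on H coincide. Then there exists τ ∈ ℂ with |τ| = 1 such that v(f) = τ • f for all f ∈ W. -/
open scoped InnerProductSpace

/-- **An isometry preserving rank-one operators over a subspace is a phase there.**
Let `v` be a linear isometry of a complex Hilbert space `H` and `W` a nonzero
subspace such that for all `f, g ∈ W` the rank-one operators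
`h ↦ ⟪v g, h⟫ • v f` and `h ↦ ⟪g, h⟫ • f` coincide. Then there is a phase
`τ ∈ ℂ`, `|τ| = 1`, with `v f = τ • f` for all `f ∈ W`. -/
theorem isometry_eq_phase_on_subspace
    {H : Type*} [NormedAddCommGroup H] [InnerProductSpace ℂ H]
    (v : H →L[ℂ] H) (hv : ∀ f : H, ‖v f‖ = ‖f‖)
    (W : Submodule ℂ H) (hW : W ≠ ⊥)
    (h : ∀ f ∈ W, ∀ g ∈ W, ∀ h : H, ⟪v g, h⟫_ℂ • v f = ⟪g, h⟫_ℂ • f) :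
    ∃ τ : ℂ, ‖τ‖ = 1 ∧ ∀ f ∈ W, v f = τ • f := by
  obtain ⟨g, hgW, hg⟩ := W.exists_mem_ne_zero_of_ne_bot hW
  have hvg : v g ≠ 0 := by
    intro h0
    apply hg
    rw [← norm_eq_zero, ← hv g, h0, norm_zero]
  have hne : ⟪v g, v g⟫_ℂ ≠ 0 := inner_self_ne_zero.mpr hvg
  have key : ∀ f ∈ W, v f = ((⟪v g, v g⟫_ℂ)⁻¹ * ⟪g, v g⟫_ℂ) • f := by
    intro f hf
    rw [mul_smul, ← h f hf g hgW (v g), inv_smul_smul₀ hne]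
  refine ⟨_, ?_, key⟩
  have h1 := congrArg norm (key g hgW)
  rw [norm_smul, hv g] at h1
  exact mul_right_cancel₀ (norm_ne_zero_iff.mpr hg) (by rw [← h1, one_mul])
end

section
/- Let H be a complex Hilbert space and N a positive natural number, and let H^N denote the Hilbert space direct sum of N copies of H. For a unitary N×N complex matrix u, let Û_u be the unitary operator on H^N given by (Û_u x)_i = Σ_j u_{ij} • x_j, and let Û_{ū} be the corresponding operator for the entrywise complex conjugate matrix ū. If S is a bounded linear operator on H^N satisfying S ∘ Û_u = Û_{ū} ∘ S for every unitary N×N matrix u, then S = 0. -/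
/-- **Disjointness of the defining representation of `U(N)` and its conjugate.**
Let `H` be a complex Hilbert space, `H^N` the `ℓ²`-direct sum of `N` copies of `H`,
and for a unitary `N × N` matrix `u` let `Û_u` be the operator
`(Û_u x)_i = Σ_j u_{ij} • x_j`, and `Û_ū` the corresponding operator for the
entrywise conjugate matrix `ū`. If a bounded operator `S` on `H^N` satisfies
`S ∘ Û_u = Û_ū ∘ S` for every unitary `u`, then `S = 0`. -/
theorem intertwiner_of_conjugate_gauge_action_eq_zero
    {H : Type*} [NormedAddCommGroup H] [InnerProductSpace ℂ H] [CompleteSpace H]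
    (N : ℕ) (hN : 0 < N)
    (S : PiLp 2 (fun _ : Fin N => H) →L[ℂ] PiLp 2 (fun _ : Fin N => H))
    (hS : ∀ u : Matrix (Fin N) (Fin N) ℂ, star u * u = 1 → u * star u = 1 →
      ∀ (x : PiLp 2 (fun _ : Fin N => H)) (i : Fin N),
        S ((WithLp.equiv 2 (Fin N → H)).symm fun k => ∑ j, u k j • x j) i
          = ∑ j, (starRingEnd ℂ) (u i j) • S x j) :
    S = 0 := by
  ext x i
  have h1 : star (Matrix.diagonal (fun _ : Fin N => Complex.I))
      * Matrix.diagonal (fun _ : Fin N => Complex.I) = 1 := by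
    rw [Matrix.star_eq_conjTranspose, Matrix.diagonal_conjTranspose,
      Matrix.diagonal_mul_diagonal, ← Matrix.diagonal_one]
    congr 1
    funext k
    simp
  have h2 : Matrix.diagonal (fun _ : Fin N => Complex.I)
      * star (Matrix.diagonal (fun _ : Fin N => Complex.I)) = 1 := by
    rw [Matrix.star_eq_conjTranspose, Matrix.diagonal_conjTranspose,
      Matrix.diagonal_mul_diagonal, ← Matrix.diagonal_one]
    congr 1
    funext k
    simp
  have h := hS _ h1 h2 x i
  have hx : ((WithLp.equiv 2 (Fin N → H)).symm fun k =>
      ∑ j, (Matrix.diagonal (fun _ : Fin N => Complex.I)) k j • x j) = Complex.I • x := by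
    ext k
    simp [Matrix.diagonal_apply, ite_smul]
  have hy : ∑ j, (starRingEnd ℂ) ((Matrix.diagonal (fun _ : Fin N => Complex.I)) i j) • S x j
      = -(Complex.I • S x i) := by
    rw [Finset.sum_eq_single i]
    · simp
    · intro j _ hj
      simp [Matrix.diagonal_apply_ne' _ hj]
    · simp
  rw [hx, hy, map_smul, PiLp.smul_apply, eq_neg_iff_add_eq_zero, ← add_smul] at h
  have h0 : Complex.I + Complex.I ≠ 0 := by
    rw [← two_mul]
    exact mul_ne_zero two_ne_zero Complex.I_ne_zero
  simpa using (smul_eq_zero.mp h).resolve_left h0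
end

section
/- Let L²(S¹) be the complex L² space of the unit circle with normalized Haar measure and L²(ℝ) the complex L² space of the real line with Lebesgue measure. Then the map θ̃ defined by (θ̃ f)(x) := π^{−1/2} · f((x−i)/(x+i)) / (x+i) for x ∈ ℝ is a unitary operator (a surjective linear isometry) from L²(S¹) onto L²(ℝ). In particular, (1/π)∫_ℝ |f((x−i)/(x+i))|²/(x²+1) dx = (1/2π)∫₀^{2π} |f(e^{iλ})|² dλ for every f ∈ L²(S¹). -/
open MeasureTheory Real AddCircle
open scoped Real

noncomputable section

instance : Fact (0 < 2 * π) := ⟨by positivity⟩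


/-- The Cayley transform in angular coordinates. -/
def cayE (x : ℝ) : AddCircle (2 * π) := ((2 * Real.arctan x + π : ℝ) : AddCircle (2 * π))

/-- The Cauchy density. -/
def cayD (x : ℝ) : ENNReal := ENNReal.ofReal (1 / (π * (x ^ 2 + 1)))

/-- The Cauchy measure. -/
def cayNu : Measure ℝ := (volume : Measure ℝ).withDensity cayD

/-- The multiplier. -/
def cayW (x : ℝ) : ℂ := ((Real.sqrt π : ℂ))⁻¹ * (1 / ((x : ℂ) + Complex.I))

lemma cayD_pos (x : ℝ) : 0 < 1 / (π * (x ^ 2 + 1)) := by positivity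

lemma cayD_meas : Measurable cayD := by
  unfold cayD
  fun_prop

lemma cay_addI_ne (x : ℝ) : (x : ℂ) + Complex.I ≠ 0 := by
  intro h
  have := congrArg Complex.im h
  simp at this

lemma cayW_ne (x : ℝ) : cayW x ≠ 0 := by
  have h1 : (Real.sqrt π : ℂ) ≠ 0 := by
    have : Real.sqrt π ≠ 0 := (Real.sqrt_pos.mpr Real.pi_pos).ne'
    exact_mod_cast this
  exact mul_ne_zero (inv_ne_zero h1) (one_div_ne_zero (cay_addI_ne x))

lemma cayW_cont : Continuous cayW := by
  unfold cayW
  refine continuous_const.mul (continuous_const.div (by fun_prop) cay_addI_ne)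

lemma cayW_norm_sq (x : ℝ) : ‖cayW x‖ ^ 2 = 1 / (π * (x ^ 2 + 1)) := by
  have h1 : ‖(x : ℂ) + Complex.I‖ ^ 2 = x ^ 2 + 1 := by
    rw [← Complex.normSq_eq_norm_sq, Complex.normSq_apply]
    simp
    ring
  have h2 : ‖(Real.sqrt π : ℂ)‖ ^ 2 = π := by
    rw [Complex.norm_real, Real.norm_eq_abs, sq_abs, Real.sq_sqrt Real.pi_pos.le]
  unfold cayW
  rw [norm_mul, mul_pow, norm_inv, inv_pow, h2, norm_div, div_pow, h1]
  simp [mul_comm]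

lemma cayW_enorm_sq (x : ℝ) : ‖cayW x‖ₑ ^ (2 : ℝ) = cayD x := by
  rw [cayD, ← cayW_norm_sq, ENNReal.ofReal_pow (norm_nonneg _), ofReal_norm]
  norm_cast

lemma cayE_cont : Continuous cayE := by
  unfold cayE
  exact (AddCircle.continuous_mk' (2 * π)).comp
    (by fun_prop : Continuous fun x : ℝ => 2 * Real.arctan x + π)

lemma cay_range : (fun x : ℝ => 2 * Real.arctan x + π) '' Set.univ = Set.Ioo 0 (2 * π) := by
  ext y
  simp only [Set.image_univ, Set.mem_range, Set.mem_Ioo]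
  constructor
  · rintro ⟨x, rfl⟩
    have h1 := Real.neg_pi_div_two_lt_arctan x
    have h2 := Real.arctan_lt_pi_div_two x
    constructor <;> linarith
  · rintro ⟨h1, h2⟩
    refine ⟨Real.tan ((y - π) / 2), ?_⟩
    rw [Real.arctan_tan (by linarith) (by linarith)]
    ring

lemma cay_inj0 : Function.Injective (fun x : ℝ => 2 * Real.arctan x + π) := by
  intro x y h
  apply Real.arctan_injective
  simp only at h
  linarith

lemma cayE_inj : Function.Injective cayE := by
  intro x y h
  have hm : ∀ x : ℝ, 2 * Real.arctan x + π ∈ Set.Ico (0 : ℝ) (0 + 2 * π) := by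
    intro x
    have h1 := Real.neg_pi_div_two_lt_arctan x
    have h2 := Real.arctan_lt_pi_div_two x
    constructor <;> linarith
  exact cay_inj0 ((AddCircle.coe_eq_coe_iff_of_mem_Ico (hm x) (hm y)).mp h)

lemma cayE_emb : MeasurableEmbedding cayE := cayE_cont.measurableEmbedding cayE_inj

lemma cay_map0 : Measure.map (fun x : ℝ => 2 * Real.arctan x + π)
    (volume.withDensity fun x : ℝ => ENNReal.ofReal (2 * (1 / (1 + x ^ 2)))) =
      volume.restrict (Set.Ioc 0 (0 + 2 * π)) := by
  have hd : ∀ x ∈ (Set.univ : Set ℝ), HasDerivWithinAt (fun x : ℝ => 2 * Real.arctan x + π)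
      (2 * (1 / (1 + x ^ 2))) Set.univ x := fun x _ =>
    (((Real.hasDerivAt_arctan x).const_mul 2).add_const π).hasDerivWithinAt
  have h := map_withDensity_abs_det_fderiv_eq_addHaar (volume : Measure ℝ)
    MeasurableSet.univ.nullMeasurableSet
    (fun x hx => (hd x hx).hasFDerivWithinAt) cay_inj0.injOn
  rw [cay_range, Measure.restrict_univ] at h
  simp only [ContinuousLinearMap.det_toSpanSingleton] at h
  rw [zero_add, ← Measure.restrict_congr_set Ioo_ae_eq_Ioc, ← h]
  congr 2
  ext x
  rw [abs_of_nonneg (by positivity)]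

lemma cay_nu_eq : cayNu = (ENNReal.ofReal (2 * π))⁻¹ •
    (volume.withDensity fun x : ℝ => ENNReal.ofReal (2 * (1 / (1 + x ^ 2)))) := by
  rw [cayNu, ← withDensity_smul _ (by fun_prop)]
  congr 1
  ext x
  rw [Pi.smul_apply, smul_eq_mul, ← ENNReal.ofReal_inv_of_pos (by positivity),
    ← ENNReal.ofReal_mul (by positivity), cayD]
  congr 1
  field_simp
  ring

lemma cay_mp : MeasurePreserving cayE cayNu (@haarAddCircle (2 * π) _) := by
  refine ⟨cayE_cont.measurable, ?_⟩
  have h1 := (AddCircle.measurePreserving_mk (2 * π) 0).map_eq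
  rw [← cay_map0, Measure.map_map (AddCircle.measurePreserving_mk (2 * π) 0).measurable
    (by fun_prop)] at h1
  have h0 : ENNReal.ofReal (2 * π) ≠ 0 := by simp [Real.pi_pos]
  rw [cay_nu_eq, Measure.map_smul]
  have h2 : Measure.map cayE
      (volume.withDensity fun x : ℝ => ENNReal.ofReal (2 * (1 / (1 + x ^ 2)))) = volume := h1
  rw [h2, volume_eq_smul_haarAddCircle, smul_smul,
    ENNReal.inv_mul_cancel h0 ENNReal.ofReal_ne_top, one_smul]

lemma cay_ac : (volume : Measure ℝ) ≪ cayNu := by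
  refine withDensity_absolutelyContinuous' cayD_meas.aemeasurable (Filter.Eventually.of_forall ?_)
  intro x
  exact (ENNReal.ofReal_pos.mpr (cayD_pos x)).ne'

lemma cay_eLpNorm (k : ℝ → ℂ) :
    eLpNorm (fun x => cayW x * k x) 2 volume = eLpNorm k 2 cayNu := by
  rw [eLpNorm_eq_lintegral_rpow_enorm_toReal (by simp) (by simp),
    eLpNorm_eq_lintegral_rpow_enorm_toReal (by simp) (by simp), cayNu,
    lintegral_withDensity_eq_lintegral_mul_non_measurable _ cayD_meas
      (Filter.Eventually.of_forall fun x => ENNReal.ofReal_lt_top)]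
  congr 1
  refine lintegral_congr fun x => ?_
  rw [Pi.mul_apply, ENNReal.toReal_ofNat, enorm_mul,
    ENNReal.mul_rpow_of_nonneg _ _ (by norm_num), cayW_enorm_sq]

lemma cay_memLp {F : AddCircle (2 * π) → ℂ} (hF : MemLp F 2 (@haarAddCircle (2 * π) _)) :
    MemLp (fun x => cayW x * F (cayE x)) 2 volume := by
  have h := hF.comp_measurePreserving cay_mp
  refine ⟨cayW_cont.aestronglyMeasurable.mul (h.1.mono_ac cay_ac), ?_⟩
  rw [cay_eLpNorm]
  exact h.2

lemma cay_congr {F G : AddCircle (2 * π) → ℂ} (h : F =ᵐ[@haarAddCircle (2 * π) _] G) :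
    ∀ᵐ x : ℝ, F (cayE x) = G (cayE x) :=
  cay_ac.ae_le (cay_mp.quasiMeasurePreserving.ae_eq_comp h)

/-- The isometry. -/
def cayIso : Lp ℂ 2 (@haarAddCircle (2 * π) _) →ₗᵢ[ℂ] Lp ℂ 2 (volume : Measure ℝ) where
  toFun F := (cay_memLp (Lp.memLp F)).toLp _
  map_add' F G := by
    rw [← MemLp.toLp_add, MemLp.toLp_eq_toLp_iff]
    filter_upwards [cay_congr (Lp.coeFn_add F G)] with x hx
    simp only [Pi.add_apply] at hx ⊢
    rw [hx]
    ring
  map_smul' c F := by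
    rw [RingHom.id_apply, ← MemLp.toLp_const_smul, MemLp.toLp_eq_toLp_iff]
    filter_upwards [cay_congr (Lp.coeFn_smul c F)] with x hx
    simp only [Pi.smul_apply, smul_eq_mul] at hx ⊢
    rw [hx]
    ring
  norm_map' F := by
    change ‖(cay_memLp (Lp.memLp F)).toLp _‖ = _
    rw [Lp.norm_toLp, Lp.norm_def, cay_eLpNorm]
    congr 1
    exact eLpNorm_comp_measurePreserving (Lp.aestronglyMeasurable F) cay_mp

lemma cayIso_coe (F : Lp ℂ 2 (@haarAddCircle (2 * π) _)) :
    (cayIso F : ℝ → ℂ) =ᵐ[volume] fun x => cayW x * F (cayE x) :=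
  MemLp.coeFn_toLp (cay_memLp (Lp.memLp F))

lemma cayIso_surj : Function.Surjective cayIso := by
  intro g
  have hg := Lp.memLp g
  have hk : (fun x => cayW x * ((cayW x)⁻¹ * g x)) = g := by
    ext x
    rw [mul_inv_cancel_left₀ (cayW_ne x)]
  have hwm : Measurable fun x => (cayW x)⁻¹ * g x :=
    cayW_cont.measurable.inv.mul (Lp.stronglyMeasurable g).measurable
  have hext : (Function.extend cayE (fun x => (cayW x)⁻¹ * g x) 0) ∘ cayE
      = fun x => (cayW x)⁻¹ * g x := Function.extend_comp cayE_inj _ _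
  have hF : MemLp (Function.extend cayE (fun x => (cayW x)⁻¹ * g x) 0) 2
      (@haarAddCircle (2 * π) _) := by
    rw [← cay_mp.map_eq, cayE_emb.memLp_map_measure_iff, hext]
    refine ⟨hwm.aestronglyMeasurable, ?_⟩
    rw [← cay_eLpNorm, hk]
    exact hg.2
  refine ⟨hF.toLp _, ?_⟩
  apply Lp.ext
  filter_upwards [cayIso_coe (hF.toLp _), cay_congr hF.coeFn_toLp] with x h1 h2
  rw [h1, h2]
  have := congrFun hext x
  simp only [Function.comp_apply] at this
  rw [this, mul_inv_cancel_left₀ (cayW_ne x)]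

/-- **The Cayley transform induces a unitary from `L²(S¹)` onto `L²(ℝ)`.**
Here `L²(S¹)` is realized on `ℝ/2πℤ` (via `λ ↦ e^{iλ}`) with normalized Haar
measure, and the Cayley transform `θ(x) = (x−i)/(x+i) = e^{i(2·arctan x + π)}`
corresponds to the point `2·arctan x + π` of `ℝ/2πℤ`.  The map
`(θ̃ f)(x) = π^{−1/2} · f(θ(x)) / (x + i)` is a surjective linear isometry
`L²(S¹) → L²(ℝ)`; in particular
`(1/π) ∫_ℝ ‖f(θ(x))‖²/(x²+1) dx = ∫_{S¹} ‖f‖²` (the latter w.r.t. normalized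
Haar measure, i.e. `(1/2π) ∫₀^{2π} ‖f(e^{iλ})‖² dλ`). -/
theorem cayley_transform_unitary :
    (∃ Θ : Lp ℂ 2 (@haarAddCircle (2 * π) _) ≃ₗᵢ[ℂ] Lp ℂ 2 (volume : Measure ℝ),
      ∀ F : Lp ℂ 2 (@haarAddCircle (2 * π) _),
        (Θ F : ℝ → ℂ) =ᵐ[volume] fun x : ℝ =>
          ((Real.sqrt π : ℂ))⁻¹ * (F (↑(2 * Real.arctan x + π)) / ((x : ℂ) + Complex.I))) ∧
    ∀ F : Lp ℂ 2 (@haarAddCircle (2 * π) _),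
      (1 / π) * (∫ x : ℝ, ‖(F (↑(2 * Real.arctan x + π)) : ℂ)‖ ^ 2 / (x ^ 2 + 1))
        = ∫ z : AddCircle (2 * π), ‖F z‖ ^ 2 ∂(@haarAddCircle (2 * π) _) := by
  refine ⟨⟨LinearIsometryEquiv.ofSurjective cayIso cayIso_surj, fun F => ?_⟩, fun F => ?_⟩
  · filter_upwards [cayIso_coe F] with x hx
    rw [LinearIsometryEquiv.coe_ofSurjective, hx, cayW, cayE]
    ring
  · rw [← cay_mp.integral_comp cayE_emb, cayNu, integral_withDensity_eq_integral_toReal_smul cayD_meas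
      (Filter.Eventually.of_forall fun x => ENNReal.ofReal_lt_top), ← integral_const_mul]
    congr 1
    ext x
    rw [cayD, ENNReal.toReal_ofReal (cayD_pos x).le, smul_eq_mul, cayE]
    field_simp

end
end
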